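/- arXiv:1204.2227 — 6 statements merged into one kernel-verified Lean document; each statement's English description precedes it below -/
import Mathlib

section
/- Let a : Fin m → Fin n → Fin p → ℂ be a nonzero array of probability amplitudes of a tripartite pure state. Then a is factorizable with respect to the first component (there exist α : Fin m → ℂ and β : Fin n → Fin p → ℂ with a i j k = α i * β j k for all i, j, k) if and only if a i j k * a i' j' k' − a i j' k' * a i' j k = 0 for all i, i' : Fin m, j, j' : Fin n, k, k' : Fin p. -/
theorem tripartite_factorizable_first_iff (m n p : ℕ)
    (a : Fin m → Fin n → Fin p → ℂ) (ha : a ≠ 0) :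
    (∃ (α : Fin m → ℂ) (β : Fin n → Fin p → ℂ), ∀ i j k, a i j k = α i * β j k) ↔
      ∀ (i i' : Fin m) (j j' : Fin n) (k k' : Fin p),
        a i j k * a i' j' k' - a i j' k' * a i' j k = 0 := by
  constructor
  · rintro ⟨α, β, h⟩ i i' j j' k k'
    simp only [h]
    ring
  · intro h
    obtain ⟨i₀, j₀, k₀, h₀⟩ : ∃ i j k, a i j k ≠ 0 := by
      by_contra! hz
      exact ha (funext fun i => funext fun j => funext fun k => hz i j k)
    -- Every slice `a i` is a multiple of the slice `a i₀` through a nonzero entry.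
    refine ⟨fun i => a i j₀ k₀, fun j k => a i₀ j k / a i₀ j₀ k₀, fun i j k => ?_⟩
    rw [← mul_div_assoc, eq_div_iff h₀]
    exact sub_eq_zero.mp (h i i₀ j j₀ k k₀)
end

section
/- Let a : Fin m → Fin n → Fin p → ℂ be a nonzero array of probability amplitudes of a tripartite pure state. Then a is factorizable with respect to at least one of its three components if and only if at least one of the following three conditions holds: (1) a i j k * a i' j' k' − a i j' k' * a i' j k = 0 for all i, j, k, i', j', k'; (2) a i j k * a i' j' k' − a i' j k' * a i j' k = 0 for all i, j, k, i', j', k'; (3) a i j k * a i' j' k' − a i' j' k * a i j k' = 0 for all i, j, k, i', j', k'. -/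
/-!
Each condition says that all 2 × 2 minors vanish for the flattening of `a` that separates one index
from the other two, and factorizability in that component says that this flattening has rank at
most one. Given a nonzero entry `a i₀ j₀ k₀`, vanishing of the minors through that entry writes the
flattening as the outer product of its column through the entry and the normalized row through it.
-/

theorem tripartite_factorizable_some_component_iff (m n p : ℕ)
    (a : Fin m → Fin n → Fin p → ℂ) (ha : a ≠ 0) :
    ((∃ (α : Fin m → ℂ) (β : Fin n → Fin p → ℂ), ∀ i j k, a i j k = α i * β j k) ∨
     (∃ (α : Fin n → ℂ) (β : Fin m → Fin p → ℂ), ∀ i j k, a i j k = α j * β i k) ∨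
     (∃ (α : Fin p → ℂ) (β : Fin m → Fin n → ℂ), ∀ i j k, a i j k = α k * β i j)) ↔
    ((∀ (i i' : Fin m) (j j' : Fin n) (k k' : Fin p),
        a i j k * a i' j' k' - a i j' k' * a i' j k = 0) ∨
     (∀ (i i' : Fin m) (j j' : Fin n) (k k' : Fin p),
        a i j k * a i' j' k' - a i' j k' * a i j' k = 0) ∨
     (∀ (i i' : Fin m) (j j' : Fin n) (k k' : Fin p),
        a i j k * a i' j' k' - a i' j' k * a i j k' = 0)) := by
  obtain ⟨i₀, j₀, k₀, h₀⟩ : ∃ i j k, a i j k ≠ 0 := by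
    by_contra! h
    exact ha (by ext i j k; exact h i j k)
  refine or_congr ⟨?_, fun h => ?_⟩ (or_congr ⟨?_, fun h => ?_⟩ ⟨?_, fun h => ?_⟩)
  · rintro ⟨α, β, h⟩ i i' j j' k k'
    simp only [h]
    ring
  · refine ⟨fun i => a i j₀ k₀, fun j k => a i₀ j k / a i₀ j₀ k₀, fun i j k => ?_⟩
    field_simp
    linear_combination h i i₀ j j₀ k k₀
  · rintro ⟨α, β, h⟩ i i' j j' k k'
    simp only [h]
    ring
  · refine ⟨fun j => a i₀ j k₀, fun i k => a i j₀ k / a i₀ j₀ k₀, fun i j k => ?_⟩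
    field_simp
    linear_combination h i i₀ j j₀ k k₀
  · rintro ⟨α, β, h⟩ i i' j j' k k'
    simp only [h]
    ring
  · refine ⟨fun k => a i₀ j₀ k, fun i j => a i j k₀ / a i₀ j₀ k₀, fun i j k => ?_⟩
    field_simp
    linear_combination h i i₀ j j₀ k k₀
end

section
/- Let f : ℂ → ℝ satisfy f x ≥ 0 for all x ∈ ℂ and f x = 0 ↔ x = 0. Let a : Fin m → Fin n → Fin p → ℂ be a nonzero array of probability amplitudes of a tripartite pure state. Define M₁^f(a) = ∑_{i,j,k,i',j',k'} f (a i j k * a i' j' k' − a i j' k' * a i' j k). Then M₁^f(a) = 0 if and only if a is factorizable with respect to the first component (there exist α : Fin m → ℂ and β : Fin n → Fin p → ℂ with a i j k = α i * β j k for all i, j, k). -/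
/-! A sum of nonnegative terms `f (minor)` vanishes iff every minor does, since `f` vanishes only at
`0`. The vanishing of all these `2 × 2` minors says that the flattening of `a` with rows `i` and
columns `(j, k)` has rank at most one; a nonzero entry of `a` then serves as a pivot and gives the
factorization explicitly. -/

theorem tripartite_M1_f_zero_iff_factorizable (m n p : ℕ) (f : ℂ → ℝ)
    (hf_nonneg : ∀ x : ℂ, 0 ≤ f x) (hf_zero : ∀ x : ℂ, f x = 0 ↔ x = 0)
    (a : Fin m → Fin n → Fin p → ℂ) (ha : a ≠ 0) :
    (∑ i : Fin m, ∑ j : Fin n, ∑ k : Fin p, ∑ i' : Fin m, ∑ j' : Fin n, ∑ k' : Fin p,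
        f (a i j k * a i' j' k' - a i j' k' * a i' j k)) = 0 ↔
      (∃ (α : Fin m → ℂ) (β : Fin n → Fin p → ℂ), ∀ i j k, a i j k = α i * β j k) := by
  constructor
  · intro h
    have minor_zero : ∀ i j k i' j' k', a i j k * a i' j' k' - a i j' k' * a i' j k = 0 := by
      intro i j k i' j' k'
      have nonneg {q : ℕ} {g : Fin q → ℝ} (hg : ∀ x, 0 ≤ g x) : 0 ≤ ∑ x, g x :=
        Finset.sum_nonneg fun x _ => hg x
      have term_zero {q : ℕ} {g : Fin q → ℝ} (hg : ∀ x, 0 ≤ g x) (hs : ∑ x, g x = 0) (x : Fin q) :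
          g x = 0 :=
        (Finset.sum_eq_zero_iff_of_nonneg fun y _ => hg y).1 hs x (Finset.mem_univ x)
      have h1 := term_zero (fun _ => nonneg fun _ => nonneg fun _ => nonneg fun _ =>
        nonneg fun _ => nonneg fun _ => hf_nonneg _) h i
      have h2 := term_zero (fun _ => nonneg fun _ => nonneg fun _ =>
        nonneg fun _ => nonneg fun _ => hf_nonneg _) h1 j
      have h3 := term_zero (fun _ => nonneg fun _ => nonneg fun _ =>
        nonneg fun _ => hf_nonneg _) h2 k
      have h4 := term_zero (fun _ => nonneg fun _ => nonneg fun _ => hf_nonneg _) h3 i'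
      have h5 := term_zero (fun _ => nonneg fun _ => hf_nonneg _) h4 j'
      exact (hf_zero _).1 (term_zero (fun _ => hf_nonneg _) h5 k')
    obtain ⟨i₀, j₀, k₀, pivot⟩ : ∃ i₀ j₀ k₀, a i₀ j₀ k₀ ≠ 0 := by
      by_contra! hc
      exact ha (by ext i j k; exact hc i j k)
    refine ⟨fun i => a i j₀ k₀ / a i₀ j₀ k₀, fun j k => a i₀ j k, fun i j k => ?_⟩
    rw [div_mul_eq_mul_div, eq_div_iff pivot]
    exact sub_eq_zero.1 (minor_zero i j k i₀ j₀ k₀)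
  · rintro ⟨α, β, h⟩
    have term_zero : ∀ i j k i' j' k', f (a i j k * a i' j' k' - a i j' k' * a i' j k) = 0 := by
      intro i j k i' j' k'
      rw [hf_zero, h, h, h, h]
      ring
    simp [term_zero]
end

section
/- Let a : Fin m → Fin n → Fin p → ℂ be a nonzero array of probability amplitudes of a tripartite pure state. If a is factorizable with respect to the first component (there exist α : Fin m → ℂ and β : Fin n → Fin p → ℂ with a i j k = α i * β j k for all i, j, k) and also factorizable with respect to the second component (there exist γ : Fin n → ℂ and δ : Fin m → Fin p → ℂ with a i j k = γ j * δ i k for all i, j, k), then a is completely factorizable: there exist α' : Fin m → ℂ, γ' : Fin n → ℂ and ε : Fin p → ℂ with a i j k = α' i * γ' j * ε k for all i, j, k (in particular a is also factorizable with respect to the third component). -/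
theorem tripartite_two_factorizable_implies_complete (m n p : ℕ)
    (a : Fin m → Fin n → Fin p → ℂ) (ha : a ≠ 0)
    (h1 : ∃ (α : Fin m → ℂ) (β : Fin n → Fin p → ℂ), ∀ i j k, a i j k = α i * β j k)
    (h2 : ∃ (γ : Fin n → ℂ) (δ : Fin m → Fin p → ℂ), ∀ i j k, a i j k = γ j * δ i k) :
    ∃ (α' : Fin m → ℂ) (γ' : Fin n → ℂ) (ε : Fin p → ℂ),
      ∀ i j k, a i j k = α' i * γ' j * ε k := by
  obtain ⟨α, β, hαβ⟩ := h1
  obtain ⟨γ, δ, hγδ⟩ := h2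
  -- Fix `i₀` with `α i₀ ≠ 0`. On that slice `α i₀ * β j k = γ j * δ i₀ k`, so `β` itself splits
  -- as `β j k = γ j * (δ i₀ k / α i₀)`.
  obtain ⟨i₀, hi₀⟩ : ∃ i, α i ≠ 0 := by
    by_contra! h
    exact ha (by ext i j k; simp [hαβ, h])
  refine ⟨α, γ, fun k => δ i₀ k / α i₀, fun i j k => ?_⟩
  have h : α i₀ * β j k = γ j * δ i₀ k := by rw [← hαβ, hγδ]
  rw [hαβ]
  field_simp
  linear_combination α i * h
end

section
/- Let f : ℂ → ℝ satisfy f x ≥ 0 for all x ∈ ℂ and f x = 0 ↔ x = 0, and let a : Fin m → Fin n → Fin p → Fin q → ℂ be a nonzero array of probability amplitudes of a quadripartite pure state. Define M₁₂^f(a) = ∑_{i,j,k,l,i',j',k',l'} f (a i j k l * a i' j' k' l' − a i j k' l' * a i' j' k l). Then M₁₂^f(a) = 0 if and only if a is factorizable with respect to the bipartition (12)|(34), i.e., there exist β : Fin m → Fin n → ℂ and γ : Fin p → Fin q → ℂ with a i j k l = β i j * γ k l for all i, j, k, l. -/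
/-!
Group the indices as `(i, j)` and `(k, l)` to view `a` as a matrix. The summands are the values of
`f` at the `2 × 2` minors of this matrix, so the sum vanishes exactly when all those minors do.
For a nonzero matrix this means rank one: vanishing of the minors through a nonzero entry (the pivot)
expresses `a` as the product of the pivot's column and its normalized row.
-/

theorem quadripartite_M12_f_zero_iff_factorizable (m n p q : ℕ) (f : ℂ → ℝ)
    (hf_nonneg : ∀ x : ℂ, 0 ≤ f x) (hf_zero : ∀ x : ℂ, f x = 0 ↔ x = 0)
    (a : Fin m → Fin n → Fin p → Fin q → ℂ) (ha : a ≠ 0) :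
    (∑ i : Fin m, ∑ j : Fin n, ∑ k : Fin p, ∑ l : Fin q,
      ∑ i' : Fin m, ∑ j' : Fin n, ∑ k' : Fin p, ∑ l' : Fin q,
        f (a i j k l * a i' j' k' l' - a i j k' l' * a i' j' k l)) = 0 ↔
      (∃ (β : Fin m → Fin n → ℂ) (γ : Fin p → Fin q → ℂ),
        ∀ i j k l, a i j k l = β i j * γ k l) := by
  constructor
  · intro h
    -- A vanishing sum of nonnegative terms makes every `2 × 2` minor of the `(12)|(34)` flattening
    -- of `a` vanish.
    have minor : ∀ i j k l i' j' k' l',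
        a i j k l * a i' j' k' l' - a i j k' l' * a i' j' k l = 0 := by
      intro i j k l i' j' k' l'
      rw [← hf_zero]
      simp only [← Fintype.sum_prod_type'] at h
      rw [Finset.sum_eq_zero_iff_of_nonneg (fun _ _ => hf_nonneg _)] at h
      exact h (i, j, k, l, i', j', k', l') (Finset.mem_univ _)
    obtain ⟨i₀, j₀, k₀, l₀, h₀⟩ : ∃ i j k l, a i j k l ≠ 0 := by
      by_contra! H
      exact ha (by funext i j k l; exact H i j k l)
    -- The column and the row through the pivot `a i₀ j₀ k₀ l₀`, the row normalized at the pivot.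
    refine ⟨fun i j => a i j k₀ l₀, fun k l => a i₀ j₀ k l / a i₀ j₀ k₀ l₀, fun i j k l => ?_⟩
    rw [← mul_div_assoc, eq_div_iff h₀]
    exact sub_eq_zero.mp (minor i j k l i₀ j₀ k₀ l₀)
  · rintro ⟨β, γ, h⟩
    have hz : ∀ i j k l i' j' k' l',
        f (a i j k l * a i' j' k' l' - a i j k' l' * a i' j' k l) = 0 := by
      intro i j k l i' j' k' l'
      rw [hf_zero]
      simp only [h]
      ring
    simp only [hz, Finset.sum_const_zero]
end

section
/- Let f : ℂ → ℝ satisfy f x ≥ 0 for all x ∈ ℂ and f x = 0 ↔ x = 0, and let a : Fin m → Fin n → Fin p → Fin q → ℂ be a nonzero array of probability amplitudes of a quadripartite pure state. Define M₁^f(a) = ∑_{i,j,k,l,i',j',k',l'} f (a i j k l * a i' j' k' l' − a i j' k' l' * a i' j k l). Then M₁^f(a) = 0 if and only if a is factorizable with respect to the first subsystem, i.e., there exist α : Fin m → ℂ and β : Fin n → Fin p → Fin q → ℂ with a i j k l = α i * β j k l for all i, j, k, l. -/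
/-!
Since `f ≥ 0` vanishes only at `0`, the sum vanishes iff every `2 × 2` minor of the
`m × (n p q)` matrix obtained by flattening the last three indices of `a` vanishes, i.e. iff that
matrix has rank at most one. If `a i₀ j₀ k₀ l₀ ≠ 0` is a pivot, the minors through it give the
factorization with `α` the pivot column divided by the pivot and `β` the pivot row.
-/

lemma sum_eq_zero_iff_forall {ι : Type*} [Fintype ι] {g : ι → ℝ} (hg : ∀ x, 0 ≤ g x) :
    ∑ x, g x = 0 ↔ ∀ x, g x = 0 := by
  rw [Fintype.sum_eq_zero_iff_of_nonneg hg, funext_iff]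
  rfl

/-- The four-index version; the eight-fold sum below is a four-fold sum of four-fold sums. -/
lemma sum₄_eq_zero_iff_forall {ι κ μ ν : Type*} [Fintype ι] [Fintype κ] [Fintype μ] [Fintype ν]
    {g : ι → κ → μ → ν → ℝ} (hg : ∀ i j k l, 0 ≤ g i j k l) :
    ∑ i, ∑ j, ∑ k, ∑ l, g i j k l = 0 ↔ ∀ i j k l, g i j k l = 0 := by
  have h₁ : ∀ i j k, 0 ≤ ∑ l, g i j k l := fun i j k => Finset.sum_nonneg fun l _ => hg i j k l
  have h₂ : ∀ i j, 0 ≤ ∑ k, ∑ l, g i j k l := fun i j => Finset.sum_nonneg fun k _ => h₁ i j k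
  have h₃ : ∀ i, 0 ≤ ∑ j, ∑ k, ∑ l, g i j k l := fun i => Finset.sum_nonneg fun j _ => h₂ i j
  rw [sum_eq_zero_iff_forall h₃]
  refine forall_congr' fun i => (sum_eq_zero_iff_forall (h₂ i)).trans ?_
  refine forall_congr' fun j => (sum_eq_zero_iff_forall (h₁ i j)).trans ?_
  exact forall_congr' fun k => sum_eq_zero_iff_forall (hg i j k)

theorem quadripartite_M1_f_zero_iff_factorizable (m n p q : ℕ) (f : ℂ → ℝ)
    (hf_nonneg : ∀ x : ℂ, 0 ≤ f x) (hf_zero : ∀ x : ℂ, f x = 0 ↔ x = 0)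
    (a : Fin m → Fin n → Fin p → Fin q → ℂ) (ha : a ≠ 0) :
    (∑ i : Fin m, ∑ j : Fin n, ∑ k : Fin p, ∑ l : Fin q,
      ∑ i' : Fin m, ∑ j' : Fin n, ∑ k' : Fin p, ∑ l' : Fin q,
        f (a i j k l * a i' j' k' l' - a i j' k' l' * a i' j k l)) = 0 ↔
      (∃ (α : Fin m → ℂ) (β : Fin n → Fin p → Fin q → ℂ),
        ∀ i j k l, a i j k l = α i * β j k l) := by
  constructor
  · intro h
    have hminor : ∀ i j k l i' j' k' l',
        f (a i j k l * a i' j' k' l' - a i j' k' l' * a i' j k l) = 0 := by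
      intro i j k l i' j' k' l'
      have hin := (sum₄_eq_zero_iff_forall fun i j k l =>
        Finset.sum_nonneg fun i' _ => Finset.sum_nonneg fun j' _ =>
          Finset.sum_nonneg fun k' _ => Finset.sum_nonneg fun l' _ =>
            hf_nonneg (a i j k l * a i' j' k' l' - a i j' k' l' * a i' j k l)).1 h i j k l
      exact (sum₄_eq_zero_iff_forall fun i' j' k' l' =>
        hf_nonneg (a i j k l * a i' j' k' l' - a i j' k' l' * a i' j k l)).1 hin i' j' k' l'
    obtain ⟨i₀, j₀, k₀, l₀, hc⟩ : ∃ i j k l, a i j k l ≠ 0 := by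
      by_contra! hall
      exact ha (by ext i j k l; exact hall i j k l)
    refine ⟨fun i => a i j₀ k₀ l₀ / a i₀ j₀ k₀ l₀, a i₀, fun i j k l => ?_⟩
    have hm := sub_eq_zero.1 ((hf_zero _).1 (hminor i j k l i₀ j₀ k₀ l₀))
    rw [div_mul_eq_mul_div, eq_div_iff hc, hm]
  · rintro ⟨α, β, h⟩
    have hminor : ∀ i j k l i' j' k' l',
        f (a i j k l * a i' j' k' l' - a i j' k' l' * a i' j k l) = 0 := by
      intro i j k l i' j' k' l'
      rw [hf_zero, h i j k l, h i' j' k' l', h i j' k' l', h i' j k l]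
      ring
    simp only [hminor, Finset.sum_const_zero]
end
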